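/- Let Q be a regular local ring, f₁,…,f_c a Q-regular sequence, and R = Q/(f₁,…,f_c) (a local complete intersection). Let M, N, L be finitely generated R-modules with N ≠ 0 and Tor_i^R(M,N) = 0 for all i > 0. If Ext^i_R(L, M ⊗_R N) = 0 for all sufficiently large i, then Ext^i_R(L, M) = 0 for all sufficiently large i. -/

import Mathlib

/-!
STATEMENT 1:
`f` a `Q`-regular sequence), `M, N, L` are finitely generated `R`-modules with `N ≠ 0` and
`Tor_i^R(M, N) = 0` for all `i > 0`, and `Ext^i_R(L, M ⊗_R N) = 0` for `i ≫ 0`, then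
`Ext^i_R(L, M) = 0` for `i ≫ 0`.
-/

open CategoryTheory CategoryTheory.Limits

universe u

/-- A Noetherian local ring is regular if its maximal ideal can be generated by
(Krull dimension of the ring) many elements. -/
def IsRegularLocal (Q : Type u) [CommRing Q] [IsLocalRing Q] : Prop :=
  IsNoetherianRing Q ∧ ∃ s : Finset Q, Ideal.span (s : Set Q) = IsLocalRing.maximalIdeal Q ∧
    (s.card : WithBot ℕ∞) = ringKrullDim Q

/-!
Write `κ` for the residue field of `Q`. The vanishing of `Tor` says that `M ⊗ᴸ N` is `M ⊗ N`, so the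
objects `X` of `D(R)` for which `Hom(L, (M ⊗ᴸ X)⟦i⟧)` vanishes for `i ≫ 0` form a triangulated
subcategory containing `N`. For `x` regular on a ring `S` and an `S ⧸ x`-module `N`, the complex
`S ⧸ x ⊗ᴸ N` has both its homology modules isomorphic to `N`; hence, by dévissage along `f`, the
triangulated subcategory contains `R ⊗ᴸ F`, where `F` is a projective resolution of `N` over `Q`.

Regular parameters `x` of `Q` form a regular sequence, so that the Koszul complex `K(x; Q)` is a
resolution of `κ`. Lifting a generator of `κ` through a surjection `N ⟶ κ` yields a map `Q ⟶ F`. The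
induced map `K(x; Q) ⟶ K(x; F)` has a retraction, given by extending `F ⟶ N ⟶ κ` to `K(x; F)`. After
`M ⊗ᴸ (R ⊗ᴸ -)`, the Koszul object of `M` on `x` is thus a retract of one for which `Hom` from `L`
vanishes in high degrees, and Nakayama's lemma removes the elements of `x` one at a time.
-/

section RegularLocal

open IsLocalRing RingTheory.Sequence
open scoped Pointwise

theorem IsRegularLocal.isRegularLocalRing {Q : Type u} [CommRing Q] [IsLocalRing Q]
    (hQ : IsRegularLocal Q) : IsRegularLocalRing Q := by
  obtain ⟨_, s, hspan, hcard⟩ := hQ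
  refine IsRegularLocalRing.of_spanFinrank_maximalIdeal_le Q ?_
  rw [← hspan, ← hcard, ← Set.ncard_coe_finset]
  exact_mod_cast Submodule.spanFinrank_span_le_ncard_of_finite s.finite_toSet

variable {Q : Type*} [CommRing Q]

theorem isLocalRing_quotient_span_singleton [IsLocalRing Q] {x : Q} (hx : x ∈ maximalIdeal Q) :
    IsLocalRing (Q ⧸ Ideal.span {x}) :=
  have : Nontrivial (Q ⧸ Ideal.span {x}) := Ideal.Quotient.nontrivial_iff.mpr <|
    ne_top_of_le_ne_top Ideal.IsPrime.ne_top' ((Ideal.span_singleton_le_iff_mem _).mpr hx)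
  .of_surjective' _ Ideal.Quotient.mk_surjective

theorem exists_span_insert_erase_eq_maximalIdeal [IsLocalRing Q] [DecidableEq Q] {s : Finset Q}
    (hs : Ideal.span (s : Set Q) = maximalIdeal Q) {x : Q} (hx : x ∈ maximalIdeal Q)
    (hx2 : x ∉ maximalIdeal Q ^ 2) :
    ∃ y ∈ s, Ideal.span (insert x ((s.erase y : Finset Q) : Set Q)) = maximalIdeal Q := by
  obtain ⟨c, -, hc⟩ := Submodule.mem_span_finset.mp (hs.symm ▸ hx)
  obtain ⟨y, hy, hunit⟩ : ∃ y ∈ s, IsUnit (c y) := by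
    by_contra! hcon
    refine hx2 (hc ▸ Ideal.sum_mem _ fun i hi ↦ ?_)
    rw [pow_two]
    exact Ideal.mul_mem_mul ((mem_maximalIdeal _).mpr (hcon i hi)) (hs ▸ Ideal.subset_span hi)
  have hys : c y • y = x - ∑ i ∈ s.erase y, c i • i := by
    rw [← hc, ← Finset.add_sum_erase s _ hy, add_sub_cancel_right]
  refine ⟨y, hy, le_antisymm ?_ ?_⟩
  · rw [Ideal.span_le, Set.insert_subset_iff]
    exact ⟨hx, fun z hz ↦ hs ▸ Ideal.subset_span (Finset.mem_of_mem_erase hz)⟩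
  · rw [← hs, Ideal.span_le, ← Finset.insert_erase hy, Finset.coe_insert, Set.insert_subset_iff,
      Finset.erase_insert (Finset.notMem_erase y s)]
    refine ⟨(Ideal.unit_mul_mem_iff_mem _ hunit).mp ?_,
      (Set.subset_insert _ _).trans Ideal.subset_span⟩
    rw [← smul_eq_mul, hys]
    exact Ideal.sub_mem _ (Ideal.subset_span (Set.mem_insert _ _)) <| Ideal.sum_mem _ fun i hi ↦
      Ideal.mul_mem_left _ _ (Ideal.subset_span (Set.mem_insert_of_mem _ hi))

theorem spanFinrank_maximalIdeal_quotient_add_one_le [IsLocalRing Q] [IsNoetherianRing Q] {x : Q}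
    [IsLocalRing (Q ⧸ Ideal.span {x})] (hx : x ∈ maximalIdeal Q) (hx2 : x ∉ maximalIdeal Q ^ 2) :
    (maximalIdeal (Q ⧸ Ideal.span {x})).spanFinrank + 1 ≤ (maximalIdeal Q).spanFinrank := by
  classical
  have hfg : Submodule.FG (maximalIdeal Q) := IsNoetherian.noetherian _
  set s := hfg.finite_generators.toFinset
  have hs : Ideal.span (s : Set Q) = maximalIdeal Q := by
    rw [hfg.finite_generators.coe_toFinset]
    exact Submodule.span_generators _
  obtain ⟨y, hy, hspan⟩ := exists_span_insert_erase_eq_maximalIdeal hs hx hx2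
  have hspan' : maximalIdeal (Q ⧸ Ideal.span {x}) =
      Submodule.span _ ((s.erase y).image (Ideal.Quotient.mk (Ideal.span {x})) : Set _) := by
    rw [← map_maximalIdeal_of_surjective _ (Ideal.Quotient.mk_surjective (I := Ideal.span {x})),
      ← hspan, Ideal.map_span, Set.image_insert_eq,
      Ideal.Quotient.eq_zero_iff_mem.mpr (Ideal.mem_span_singleton_self x), Ideal.span_insert_zero,
      Finset.coe_image]
  calc (maximalIdeal (Q ⧸ Ideal.span {x})).spanFinrank + 1
      ≤ ((s.erase y).image (Ideal.Quotient.mk (Ideal.span {x}))).card + 1 := by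
        rw [hspan', ← Set.ncard_coe_finset]
        gcongr
        exact Submodule.spanFinrank_span_le_ncard_of_finite (Finset.finite_toSet _)
    _ ≤ (s.erase y).card + 1 := by gcongr; exact Finset.card_image_le
    _ = s.card := Finset.card_erase_add_one hy
    _ = (maximalIdeal Q).spanFinrank := by
        rw [← hfg.generators_ncard, Set.ncard_eq_toFinset_card _ hfg.finite_generators]

theorem isRegularLocalRing_quotient_span_singleton [IsRegularLocalRing Q] {x : Q}
    (hx : x ∈ maximalIdeal Q) (hx2 : x ∉ maximalIdeal Q ^ 2) :
    IsRegularLocalRing (Q ⧸ Ideal.span {x}) := by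
  have := isLocalRing_quotient_span_singleton hx
  refine IsRegularLocalRing.of_spanFinrank_maximalIdeal_le _ ?_
  have hdim : ringKrullDim Q ≤ ringKrullDim (Q ⧸ Ideal.span {x}) + 1 := by
    rw [← Finset.coe_singleton, ← Nat.cast_one, ← Finset.card_singleton x]
    exact ringKrullDim_le_ringKrullDim_quotient_add_card {x}
      (by simpa [ringJacobson_eq_maximalIdeal] using hx)
  rw [← IsRegularLocalRing.spanFinrank_maximalIdeal] at hdim
  have hrank : (((maximalIdeal (Q ⧸ Ideal.span {x})).spanFinrank + 1 : ℕ) : WithBot ℕ∞) ≤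
      (maximalIdeal Q).spanFinrank :=
    Nat.cast_le.mpr (spanFinrank_maximalIdeal_quotient_add_one_le hx hx2)
  have := hrank.trans hdim
  rw [Nat.cast_add, Nat.cast_one] at this
  exact (ENat.WithBot.add_le_add_one_right_iff).mp this

theorem exists_mem_maximalIdeal_notMem_sq [IsLocalRing Q] [IsNoetherianRing Q] (hQ : ¬ IsField Q)
    {T : Finset (Ideal Q)} (hT : ∀ P ∈ T, P.IsPrime ∧ P ≠ maximalIdeal Q) :
    ∃ x ∈ maximalIdeal Q, x ∉ maximalIdeal Q ^ 2 ∧ ∀ P ∈ T, x ∉ P := by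
  classical
  by_contra! hcon
  have hsub : ((maximalIdeal Q : Ideal Q) : Set Q) ⊆
      ⋃ I ∈ (↑(insert (maximalIdeal Q ^ 2) T) : Set (Ideal Q)), (I : Set Q) := by
    intro x hx
    by_cases h2 : x ∈ maximalIdeal Q ^ 2
    · exact Set.mem_biUnion (by simp) h2
    · obtain ⟨P, hP, hxP⟩ := hcon x hx h2
      exact Set.mem_biUnion (by simp [hP]) hxP
  obtain ⟨I, hI, hle⟩ := (Ideal.subset_union_prime (f := id) (maximalIdeal Q ^ 2)
    (maximalIdeal Q ^ 2) fun i hi h _ ↦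
      (hT i ((Finset.mem_insert.mp hi).resolve_left h)).1).mp hsub
  rcases Finset.mem_insert.mp hI with rfl | hI
  · refine hQ (isField_iff_maximalIdeal_eq.mpr ?_)
    exact Submodule.eq_bot_of_le_smul_of_le_jacobson_bot (maximalIdeal Q) _
      (IsNoetherian.noetherian _) (by simpa [pow_two] using hle)
      (jacobson_eq_maximalIdeal _ bot_ne_top).ge
  · obtain ⟨hprime, hne⟩ := hT I hI
    exact hne ((maximalIdeal.isMaximal Q).eq_of_le hprime.ne_top hle).symm

theorem isDomain_of_isPrime_span_singleton [IsLocalRing Q] [IsNoetherianRing Q] {x : Q}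
    (hx : x ∈ maximalIdeal Q) (hprime : (Ideal.span {x}).IsPrime)
    (hmin : ∀ P ∈ minimalPrimes Q, x ∉ P) : IsDomain Q := by
  obtain ⟨P, hP, hPx⟩ := Ideal.exists_minimalPrimes_le (bot_le (a := Ideal.span {x}))
  have hPp : P.IsPrime := hP.1.1
  have hle : P ≤ maximalIdeal Q • P := fun p hp ↦ by
    obtain ⟨a, rfl⟩ := Ideal.mem_span_singleton.mp (hPx hp)
    exact Ideal.mul_mem_mul hx ((hPp.mem_or_mem hp).resolve_left (hmin P hP))
  obtain rfl : P = ⊥ := Submodule.eq_bot_of_le_smul_of_le_jacobson_bot (maximalIdeal Q) _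
    (IsNoetherian.noetherian _) hle (jacobson_eq_maximalIdeal _ bot_ne_top).ge
  exact IsDomain.of_bot_isPrime Q

theorem isDomain_of_isRegularLocalRing (Q : Type*) [CommRing Q] [IsRegularLocalRing Q] :
    IsDomain Q := by
  induction hn : (maximalIdeal Q).spanFinrank using Nat.strong_induction_on generalizing Q with
  | _ n ih =>
  by_cases hQ : IsField Q
  · exact hQ.isDomain
  have hne : ∀ P ∈ (minimalPrimes.finite_of_isNoetherianRing Q).toFinset,
      P.IsPrime ∧ P ≠ maximalIdeal Q := by
    simp only [Set.Finite.mem_toFinset]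
    refine fun P hP ↦ ⟨hP.1.1, ?_⟩
    rintro rfl
    have hht := maximalIdeal_height_eq_ringKrullDim (R := Q)
    rw [Ideal.height_eq_zero_iff.mpr hP, ← IsRegularLocalRing.spanFinrank_maximalIdeal] at hht
    have h0 : (maximalIdeal Q).spanFinrank = 0 := by exact_mod_cast hht.symm
    exact hQ (isField_iff_maximalIdeal_eq.mpr
      ((Submodule.spanFinrank_eq_zero_iff_eq_bot (IsNoetherian.noetherian _)).mp h0))
  obtain ⟨x, hx, hx2, hmin⟩ := exists_mem_maximalIdeal_notMem_sq hQ hne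
  have := isRegularLocalRing_quotient_span_singleton hx hx2
  have := ih _ (hn ▸ spanFinrank_maximalIdeal_quotient_add_one_le hx hx2) _ rfl
  exact isDomain_of_isPrime_span_singleton hx ((Ideal.Quotient.isDomain_iff_prime _).mp this)
    fun P hP ↦ hmin P (by simpa using hP)

theorem isWeaklyRegular_cons_iff_quotient (x : Q) (l : List Q) :
    IsWeaklyRegular Q (x :: l) ↔ IsSMulRegular Q x ∧
      IsWeaklyRegular (Q ⧸ Ideal.span {x}) (l.map (Ideal.Quotient.mk (Ideal.span {x}))) := by
  have e := Submodule.quotEquivOfEq (Ideal.span {x}) (x • (⊤ : Ideal Q)) (by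
    rw [← Submodule.ideal_span_singleton_smul, smul_eq_mul, Ideal.mul_top])
  rw [isWeaklyRegular_cons_iff, ← LinearEquiv.isWeaklyRegular_congr e]
  exact and_congr_right' (isWeaklyRegular_map_algebraMap_iff _ _ l).symm

theorem ofList_cons_eq_comap (x : Q) (l : List Q) :
    Ideal.ofList (x :: l) = (Ideal.ofList (l.map (Ideal.Quotient.mk (Ideal.span {x})))).comap
      (Ideal.Quotient.mk (Ideal.span {x})) := by
  rw [← Ideal.map_ofList, Ideal.comap_map_of_surjective _ Ideal.Quotient.mk_surjective,
    ← RingHom.ker_eq_comap_bot, Ideal.mk_ker, Ideal.ofList_cons, sup_comm]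

theorem exists_isWeaklyRegular_ofList_eq_maximalIdeal (Q : Type*) [CommRing Q]
    [IsRegularLocalRing Q] :
    ∃ l : List Q, IsWeaklyRegular Q l ∧ Ideal.ofList l = maximalIdeal Q := by
  induction hn : (maximalIdeal Q).spanFinrank using Nat.strong_induction_on generalizing Q with
  | _ n ih =>
  by_cases hQ : IsField Q
  · exact ⟨[], .nil _ _, by rw [Ideal.ofList_nil, isField_iff_maximalIdeal_eq.mp hQ]⟩
  obtain ⟨x, hx, hx2, -⟩ := exists_mem_maximalIdeal_notMem_sq hQ (T := ∅) (by simp)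
  have := isDomain_of_isRegularLocalRing Q
  have := isRegularLocalRing_quotient_span_singleton hx hx2
  obtain ⟨l', hl', hmax⟩ := ih _ (hn ▸ spanFinrank_maximalIdeal_quotient_add_one_le hx hx2) _ rfl
  obtain ⟨l, rfl⟩ := List.map_surjective_iff.mpr Ideal.Quotient.mk_surjective l'
  refine ⟨x :: l, (isWeaklyRegular_cons_iff_quotient x l).mpr ⟨?_, hl'⟩, ?_⟩
  · exact IsSMulRegular.of_ne_zero (by rintro rfl; exact hx2 (zero_mem _))
  · rw [ofList_cons_eq_comap, hmax]
    exact eq_maximalIdeal (Ideal.comap_isMaximal_of_surjective _ Ideal.Quotient.mk_surjective)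

end RegularLocal

section Triangulated

open Pretriangulated ObjectProperty ZeroObject

variable {𝒟 : Type*} [Category* 𝒟] [Preadditive 𝒟] [HasShift 𝒟 ℤ]

section EventualHom

variable {R : Type*} [CommRing R] [Linear R 𝒟]

/-- The Serre class of Noetherian modules. -/
def noetherianModules (R : Type*) [CommRing R] : ObjectProperty (ModuleCat R) :=
  fun M ↦ IsNoetherian R M

instance : (noetherianModules R).IsSerreClass where
  exists_zero := ⟨.of R PUnit.{_ + 1}, ModuleCat.isZero_of_subsingleton _,
    isNoetherian_of_finite R _⟩
  prop_of_mono f hf (_ : IsNoetherian R _) :=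
    isNoetherian_of_injective f.hom ((ModuleCat.mono_iff_injective f).mp hf)
  prop_of_epi f hf (_ : IsNoetherian R _) :=
    isNoetherian_of_surjective f.hom (LinearMap.range_eq_top.mpr
      ((ModuleCat.epi_iff_surjective f).mp hf))
  prop_X₂_of_shortExact hS (_ : IsNoetherian R _) (_ : IsNoetherian R _) :=
    isNoetherian_of_range_eq_ker _ _ hS.exact.moduleCat_range_eq_ker

/-- The objects `X` for which the module of morphisms `L ⟶ X⟦i⟧` belongs to `S` for `i ≫ 0`. -/
def eventuallyHom (S : ObjectProperty (ModuleCat R)) (L : 𝒟) : ObjectProperty 𝒟 :=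
  fun X ↦ ∃ n : ℤ, ∀ i, n ≤ i → S (ModuleCat.of R (L ⟶ X⟦i⟧))

variable (S : ObjectProperty (ModuleCat R)) {L : 𝒟}

instance [S.IsClosedUnderIsomorphisms] : (eventuallyHom S L).IsClosedUnderIsomorphisms where
  of_iso := by
    rintro X Y e ⟨n, hn⟩
    exact ⟨n, fun i hi ↦ S.prop_of_iso
      (Linear.homCongr R (Iso.refl L) ((shiftFunctor 𝒟 i).mapIso e)).toModuleIso (hn i hi)⟩

instance [S.IsClosedUnderIsomorphisms] : (eventuallyHom S L).IsStableUnderShift ℤ where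
  isStableUnderShiftBy a := ⟨by
    rintro X ⟨n, hn⟩
    exact ⟨n - a, fun i hi ↦ S.prop_of_iso
      (Linear.homCongr R (Iso.refl L) ((shiftFunctorAdd 𝒟 a i).app X)).toModuleIso
      (hn (a + i) (by lia))⟩⟩

instance [S.IsClosedUnderSubobjects] : (eventuallyHom S L).IsStableUnderRetracts where
  of_retract := by
    rintro X Y r ⟨n, hn⟩
    refine ⟨n, fun i hi ↦ ?_⟩
    let f : ModuleCat.of R (L ⟶ X⟦i⟧) ⟶ ModuleCat.of R (L ⟶ Y⟦i⟧) :=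
      ModuleCat.ofHom (Linear.rightComp R L (r.i⟦i⟧'))
    let g : ModuleCat.of R (L ⟶ Y⟦i⟧) ⟶ ModuleCat.of R (L ⟶ X⟦i⟧) :=
      ModuleCat.ofHom (Linear.rightComp R L (r.r⟦i⟧'))
    have hfg : f ≫ g = 𝟙 _ := by
      ext a
      simp [f, g, ← Functor.map_comp]
    have : Mono f := ⟨fun a b h ↦ by simpa [hfg] using h =≫ g⟩
    exact S.prop_of_mono f (hn i hi)

variable [HasZeroObject 𝒟] [∀ n : ℤ, (shiftFunctor 𝒟 n).Additive] [Pretriangulated 𝒟]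

theorem exists_eq_comp_shift_mor₁ {T : Triangle 𝒟} (hT : T ∈ distTriang 𝒟) {i : ℤ}
    (g : L ⟶ T.obj₂⟦i⟧) (hg : g ≫ T.mor₂⟦i⟧' = 0) :
    ∃ g' : L ⟶ T.obj₁⟦i⟧, g = g' ≫ T.mor₁⟦i⟧' := by
  obtain ⟨g', hg'⟩ : ∃ g' : L ⟶ T.obj₁⟦i⟧, g = g' ≫ (i.negOnePow • T.mor₁⟦i⟧') :=
    Triangle.coyoneda_exact₂ _ (Triangle.shift_distinguished _ hT i) g
      (show g ≫ (i.negOnePow • T.mor₂⟦i⟧') = 0 by rw [Linear.comp_units_smul, hg, smul_zero])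
  exact ⟨i.negOnePow • g', by rw [hg', Linear.comp_units_smul, Linear.units_smul_comp]⟩

instance [S.IsSerreClass] : (eventuallyHom S L).IsTriangulated where
  exists_zero := by
    refine ⟨0, isZero_zero 𝒟, 0, fun i _ ↦ S.prop_of_isZero ?_⟩
    have h0 : IsZero ((0 : 𝒟)⟦i⟧) := (shiftFunctor 𝒟 i).map_isZero (isZero_zero 𝒟)
    have : Subsingleton (L ⟶ (0 : 𝒟)⟦i⟧) := ⟨h0.eq_of_tgt⟩
    exact ModuleCat.isZero_of_subsingleton _
  ext₂' T hT := by
    rintro ⟨n₁, h₁⟩ ⟨n₃, h₃⟩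
    refine le_isoClosure _ _ ⟨max n₁ n₃, fun i hi ↦ ?_⟩
    let C := ShortComplex.mk (ModuleCat.ofHom (Linear.rightComp R L (T.mor₁⟦i⟧')))
      (ModuleCat.ofHom (Linear.rightComp R L (T.mor₂⟦i⟧'))) (by
        ext g
        simp [← Functor.map_comp, comp_distTriang_mor_zero₁₂ _ hT])
    have hC : C.Exact := (ShortComplex.moduleCat_exact_iff C).mpr fun g hg ↦
      (exists_eq_comp_shift_mor₁ hT g hg).imp fun _ ↦ Eq.symm
    exact S.prop_X₂_of_exact hC (h₁ i (le_of_max_le_left hi)) (h₃ i (le_of_max_le_right hi))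

theorem eventuallyHom_isZero_of_smul_triangle [∀ n : ℤ, (shiftFunctor 𝒟 n).Linear R] {X Y : 𝒟}
    {r : R} (hr : r ∈ Ring.jacobson R) {g : X ⟶ Y} {h : Y ⟶ X⟦(1 : ℤ)⟧}
    (hT : Triangle.mk (r • 𝟙 X) g h ∈ distTriang 𝒟)
    (hX : eventuallyHom (noetherianModules R) L X)
    (hY : eventuallyHom (IsZero (C := ModuleCat R)) L Y) :
    eventuallyHom (IsZero (C := ModuleCat R)) L X := by
  obtain ⟨m, hm⟩ := hX
  obtain ⟨n, hn⟩ := hY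
  refine ⟨max m n, fun i hi ↦ ?_⟩
  have : IsNoetherian R (L ⟶ X⟦i⟧) := hm i (le_of_max_le_left hi)
  have hvanish : Subsingleton (L ⟶ Y⟦i⟧) :=
    ModuleCat.subsingleton_of_isZero (hn i (le_of_max_le_right hi))
  have hle : (⊤ : Submodule R (L ⟶ X⟦i⟧)) ≤ Ring.jacobson R • ⊤ := fun b _ ↦ by
    obtain ⟨c, rfl⟩ : ∃ c : L ⟶ X⟦i⟧, b = c ≫ (r • 𝟙 X)⟦i⟧' :=
      exists_eq_comp_shift_mor₁ hT b (Subsingleton.elim (α := L ⟶ Y⟦i⟧) _ _)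
    rw [(shiftFunctor 𝒟 i).map_smul, (shiftFunctor 𝒟 i).map_id, Linear.comp_smul, Category.comp_id]
    exact Submodule.smul_mem_smul hr trivial
  have htop : (⊤ : Submodule R (L ⟶ X⟦i⟧)) = ⊥ :=
    (IsNoetherian.noetherian _).eq_bot_of_le_jacobson_smul hle
  have : Subsingleton (L ⟶ X⟦i⟧) := (Submodule.subsingleton_iff R).mp
    (subsingleton_of_bot_eq_top htop.symm)
  exact ModuleCat.isZero_of_subsingleton _

end EventualHom

section Koszul

variable [HasZeroObject 𝒟] [∀ n : ℤ, (shiftFunctor 𝒟 n).Additive] [Pretriangulated 𝒟]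
  {Q : Type*} [CommRing Q] [Linear Q 𝒟]

/-- `IsKoszul xs j` says that `j : X ⟶ X'` exhibits `X'` as a Koszul object of `X` on the sequence
`xs`: it is obtained from `X` by successively taking a cone of the multiplication by each element
of `xs`. -/
inductive IsKoszul : List Q → ∀ {X X' : 𝒟}, (X ⟶ X') → Prop
  | nil (X : 𝒟) : IsKoszul [] (𝟙 X)
  | cons {x : Q} {xs : List Q} {X X₁ X' : 𝒟} {i : X ⟶ X₁} {δ : X₁ ⟶ X⟦(1 : ℤ)⟧} {j : X₁ ⟶ X'}
      (hT : Triangle.mk (x • 𝟙 X) i δ ∈ distTriang 𝒟) (hj : IsKoszul xs j) :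
      IsKoszul (x :: xs) (i ≫ j)

theorem exists_isKoszul (xs : List Q) (X : 𝒟) : ∃ (X' : 𝒟) (j : X ⟶ X'), IsKoszul xs j := by
  induction xs generalizing X with
  | nil => exact ⟨X, 𝟙 X, .nil X⟩
  | cons x xs ih =>
    obtain ⟨X₁, i, δ, hT⟩ := distinguished_cocone_triangle (x • 𝟙 X)
    obtain ⟨X', j, hj⟩ := ih X₁
    exact ⟨X', i ≫ j, .cons hT hj⟩

namespace IsKoszul

theorem exists_map {xs : List Q} {X X' Y Y' : 𝒟} {i : X ⟶ X'} {j : Y ⟶ Y'} (hi : IsKoszul xs i)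
    (hj : IsKoszul xs j) (f : X ⟶ Y) : ∃ f' : X' ⟶ Y', i ≫ f' = f ≫ j := by
  induction hi generalizing Y with
  | nil X => cases hj; exact ⟨f, by simp⟩
  | @cons _ _ _ X₁ _ i₁ _ _ hT _ ih =>
    obtain _ | @⟨_, _, _, Y₁, _, j₁, _, _, hT', hj⟩ := hj
    obtain ⟨f₁, hf₁⟩ : ∃ f₁ : X₁ ⟶ Y₁, i₁ ≫ f₁ = f ≫ j₁ := by
      obtain ⟨f₁, hf₁, -⟩ := complete_distinguished_triangle_morphism _ _ hT hT' f f
        (show (_ • 𝟙 _) ≫ f = f ≫ (_ • 𝟙 _) by simp)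
      exact ⟨f₁, hf₁⟩
    obtain ⟨f', hf'⟩ := ih hj f₁
    exact ⟨f', by rw [Category.assoc, hf', reassoc_of% hf₁]⟩

theorem exists_desc {xs : List Q} {X X' E : 𝒟} {j : X ⟶ X'} (hj : IsKoszul xs j)
    (hE : ∀ x ∈ xs, x • 𝟙 E = 0) (p : X ⟶ E) : ∃ p' : X' ⟶ E, j ≫ p' = p := by
  induction hj with
  | nil X => exact ⟨p, Category.id_comp p⟩
  | @cons x xs X _ _ _ _ _ hT _ ih =>
    have hx : x • p = 0 := by
      rw [← Category.comp_id p, ← Linear.comp_smul, hE x List.mem_cons_self, comp_zero]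
    obtain ⟨p₁, hp₁⟩ := Triangle.yoneda_exact₂ _ hT p
      (show (x • 𝟙 X) ≫ p = 0 by rw [Linear.smul_comp, Category.id_comp, hx])
    obtain ⟨p', hp'⟩ := ih (fun y hy ↦ hE y (List.mem_cons_of_mem x hy)) p₁
    exact ⟨p', by rw [Category.assoc, hp', hp₁]; rfl⟩

theorem prop {xs : List Q} {X X' : 𝒟} {j : X ⟶ X'} (hj : IsKoszul xs j)
    (P : ObjectProperty 𝒟) [P.IsTriangulated] [P.IsClosedUnderIsomorphisms] (hX : P X) :
    P X' := by
  induction hj with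
  | nil => exact hX
  | cons hT _ ih => exact ih (P.ext_of_isTriangulatedClosed₃ _ hT hX hX)

theorem map {ℰ R : Type*} [Category* ℰ] [Preadditive ℰ] [HasShift ℰ ℤ] [HasZeroObject ℰ]
    [∀ n : ℤ, (shiftFunctor ℰ n).Additive] [Pretriangulated ℰ] [CommRing R] [Linear R ℰ]
    (F : 𝒟 ⥤ ℰ) [F.CommShift ℤ] [F.IsTriangulated] (φ : Q → R)
    (hF : ∀ (x : Q) (X : 𝒟), F.map (x • 𝟙 X) = φ x • 𝟙 (F.obj X)) {xs : List Q} {X X' : 𝒟}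
    {j : X ⟶ X'} (hj : IsKoszul xs j) : IsKoszul (xs.map φ) (F.map j) := by
  induction hj with
  | nil X => rw [F.map_id]; exact .nil _
  | @cons x _ X _ _ _ _ _ hT _ ih =>
    have hT' : Triangle.mk (F.map (x • 𝟙 X)) _ _ ∈ distTriang ℰ := F.map_distinguished _ hT
    rw [hF] at hT'
    rw [F.map_comp]
    exact .cons hT' ih

theorem map_of_linear {ℰ : Type*} [Category* ℰ] [Preadditive ℰ] [HasShift ℰ ℤ] [HasZeroObject ℰ]
    [∀ n : ℤ, (shiftFunctor ℰ n).Additive] [Pretriangulated ℰ] [Linear Q ℰ] (F : 𝒟 ⥤ ℰ)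
    [F.CommShift ℤ] [F.IsTriangulated] [F.Linear Q] {xs : List Q} {X X' : 𝒟} {j : X ⟶ X'}
    (hj : IsKoszul xs j) : IsKoszul xs (F.map j) := by
  simpa using hj.map F id fun x X ↦ by rw [F.map_smul, F.map_id, id]

theorem eventuallyHom_isZero [∀ n : ℤ, (shiftFunctor 𝒟 n).Linear Q] {L : 𝒟} {xs : List Q}
    {X X' : 𝒟} {j : X ⟶ X'} (hj : IsKoszul xs j) (hxs : ∀ x ∈ xs, x ∈ Ring.jacobson Q)
    (hX : eventuallyHom (noetherianModules Q) L X)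
    (hX' : eventuallyHom (IsZero (C := ModuleCat Q)) L X') :
    eventuallyHom (IsZero (C := ModuleCat Q)) L X := by
  induction hj with
  | nil => exact hX'
  | @cons x xs _ _ _ _ _ _ hT _ ih =>
    have hX₁ := ext_of_isTriangulatedClosed₃ _ _ hT hX hX
    exact eventuallyHom_isZero_of_smul_triangle (hxs x List.mem_cons_self) hT hX
      (ih (fun y hy ↦ hxs y (List.mem_cons_of_mem x hy)) hX₁ hX')

end IsKoszul

end Koszul

end Triangulated

section EssentialImage

open Pretriangulated ObjectProperty

variable {𝒞 𝒟 : Type*} [Category* 𝒞] [Category* 𝒟] [Preadditive 𝒞] [Preadditive 𝒟]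
  [HasZeroObject 𝒞] [HasZeroObject 𝒟] [HasShift 𝒞 ℤ] [HasShift 𝒟 ℤ]
  [∀ n : ℤ, (shiftFunctor 𝒞 n).Additive] [∀ n : ℤ, (shiftFunctor 𝒟 n).Additive]
  [Pretriangulated 𝒞] [Pretriangulated 𝒟]

theorem isTriangulated_map_of_surjective (F : 𝒞 ⥤ 𝒟) [F.CommShift ℤ] [F.IsTriangulated]
    (P : ObjectProperty 𝒞) [P.IsTriangulated]
    (hF : ∀ X Y, P X → P Y → Function.Surjective (F.map : (X ⟶ Y) → _)) :
    (P.map F).IsTriangulated where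
  isStableUnderShiftBy n := ⟨by
    rintro _ ⟨X, hX, ⟨e⟩⟩
    exact ⟨X⟦n⟧, P.le_shift n _ hX,
      ⟨(F.commShiftIso n).app X ≪≫ (shiftFunctor 𝒟 n).mapIso e⟩⟩⟩
  toIsTriangulatedClosed₂ := .mk' <| by
    rintro T hT ⟨X₁, h₁, ⟨e₁⟩⟩ ⟨X₃, h₃, ⟨e₃⟩⟩
    let e₁' := (F.commShiftIso (1 : ℤ)).app X₁ ≪≫ (shiftFunctor 𝒟 (1 : ℤ)).mapIso e₁
    obtain ⟨δ, hδ⟩ := hF _ _ h₃ (P.le_shift (1 : ℤ) _ h₁) (e₃.hom ≫ T.mor₃ ≫ e₁'.inv)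
    obtain ⟨X₂, h₂, a, b, hT'⟩ := P.distinguished_cocone_triangle₂ δ h₁ h₃
    have comm : (F.map δ ≫ (F.commShiftIso (1 : ℤ)).hom.app X₁) ≫ e₁.hom⟦(1 : ℤ)⟧' =
        e₃.hom ≫ T.mor₃ := by
      simp [hδ, e₁', ← Functor.map_comp]
    exact ⟨X₂, h₂, ⟨Triangle.π₂.mapIso
      (isoTriangleOfIso₁₃ _ _ (F.map_distinguished _ hT') hT e₁ e₃ comm)⟩⟩

end EssentialImage

section HomologyDevissage

open DerivedCategory Pretriangulated ObjectProperty

variable {𝒜 : Type*} [Category* 𝒜] [Abelian 𝒜] [HasDerivedCategory 𝒜]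

theorem isIso_homologyFunctor_map_mor₁ {T : Triangle (DerivedCategory 𝒜)} (hT : T ∈ distTriang _)
    {m n : ℤ} (hmn : m + 1 = n) (hm : IsZero ((homologyFunctor 𝒜 m).obj T.obj₃))
    (hn : IsZero ((homologyFunctor 𝒜 n).obj T.obj₃)) :
    IsIso ((homologyFunctor 𝒜 n).map T.mor₁) :=
  have := (HomologySequence.mono_homologyMap_mor₁_iff T hT m n hmn).mpr (hm.eq_of_src _ _)
  have := (HomologySequence.epi_homologyMap_mor₁_iff T hT n).mpr (hn.eq_of_tgt _ _)
  isIso_of_mono_of_epi _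

theorem isIso_homologyFunctor_map_mor₂ {T : Triangle (DerivedCategory 𝒜)} (hT : T ∈ distTriang _)
    {m n : ℤ} (hmn : m + 1 = n) (hm : IsZero ((homologyFunctor 𝒜 m).obj T.obj₁))
    (hn : IsZero ((homologyFunctor 𝒜 n).obj T.obj₁)) :
    IsIso ((homologyFunctor 𝒜 m).map T.mor₂) :=
  have := (HomologySequence.mono_homologyMap_mor₂_iff T hT m).mpr (hm.eq_of_src _ _)
  have := (HomologySequence.epi_homologyMap_mor₂_iff T hT m n hmn).mpr (hn.eq_of_tgt _ _)
  isIso_of_mono_of_epi _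

theorem nonempty_iso_singleFunctor_homologyFunctor (X : DerivedCategory 𝒜) (n : ℤ) [X.IsGE n]
    [X.IsLE n] : Nonempty (X ≅ (singleFunctor 𝒜 n).obj ((homologyFunctor 𝒜 n).obj X)) := by
  obtain ⟨Y, ⟨e⟩⟩ := exists_iso_singleFunctor_obj_of_isGE_of_isLE X n
  exact ⟨e ≪≫ (singleFunctor 𝒜 n).mapIso
    ((singleFunctorCompHomologyFunctorIso 𝒜 n).symm.app Y ≪≫
      (homologyFunctor 𝒜 n).mapIso e.symm)⟩

variable (P : ObjectProperty (DerivedCategory 𝒜)) [P.IsTriangulated] [P.IsClosedUnderIsomorphisms]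

theorem prop_of_prop_single_homology_of_isGE_of_isLE {X : DerivedCategory 𝒜} {n : ℤ} [X.IsGE n]
    [X.IsLE n] (hX : P ((singleFunctor 𝒜 0).obj ((homologyFunctor 𝒜 n).obj X))) : P X := by
  obtain ⟨e⟩ := nonempty_iso_singleFunctor_homologyFunctor X n
  exact P.prop_of_iso (((singleFunctors 𝒜).shiftIso (-n) n 0 (by lia)).app _ ≪≫ e.symm)
    (P.le_shift (-n) _ hX)

theorem prop_of_forall_prop_single_homology {a b : ℤ} {X : DerivedCategory 𝒜} [X.IsGE a] [X.IsLE b]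
    (hX : ∀ n, P ((singleFunctor 𝒜 0).obj ((homologyFunctor 𝒜 n).obj X))) : P X := by
  obtain ⟨k, hk⟩ : ∃ k : ℕ, b < a + k := ⟨(b - a).toNat + 1, by lia⟩
  induction k generalizing b X with
  | zero => exact P.prop_of_isZero (TStructure.t.isZero X b a (by lia))
  | succ k ih =>
    let T := (TStructure.t.triangleLTGE b).obj X
    have hT : T ∈ distTriang _ := TStructure.t.triangleLTGE_distinguished b X
    have : T.obj₁.IsLE (b - 1) :=
      inferInstanceAs (TStructure.t.IsLE ((TStructure.t.truncLT b).obj X) _)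
    have : T.obj₁.IsGE a := inferInstanceAs (TStructure.t.IsGE ((TStructure.t.truncLT b).obj X) _)
    have : T.obj₃.IsLE b := inferInstanceAs (TStructure.t.IsLE ((TStructure.t.truncGE b).obj X) _)
    have : T.obj₃.IsGE b := inferInstanceAs (TStructure.t.IsGE ((TStructure.t.truncGE b).obj X) _)
    refine P.ext_of_isTriangulatedClosed₂ T hT (ih (b := b - 1) (fun n ↦ ?_) (by lia)) ?_
    · by_cases hn : n < b
      · have := isIso_homologyFunctor_map_mor₁ hT (sub_add_cancel n 1)
          (T.obj₃.isZero_of_isGE b _ (by lia)) (T.obj₃.isZero_of_isGE b _ hn)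
        exact P.prop_of_iso ((singleFunctor 𝒜 0).mapIso
          (asIso ((homologyFunctor 𝒜 n).map T.mor₁)).symm) (hX n)
      · exact P.prop_of_isZero
          ((singleFunctor 𝒜 0).map_isZero (T.obj₁.isZero_of_isLE (b - 1) n (by lia)))
    · have := isIso_homologyFunctor_map_mor₂ hT (m := b) rfl
        (T.obj₁.isZero_of_isLE (b - 1) _ (by lia)) (T.obj₁.isZero_of_isLE (b - 1) _ (by lia))
      exact prop_of_prop_single_homology_of_isGE_of_isLE P (P.prop_of_iso
        ((singleFunctor 𝒜 0).mapIso (asIso ((homologyFunctor 𝒜 b).map T.mor₂))) (hX b))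

end HomologyDevissage

section ProjectiveResolution

open HomologicalComplex ZeroObject

section MapExtend

variable {𝒜 ℬ ι ι' : Type*} [Category* 𝒜] [Category* ℬ] [Preadditive 𝒜] [Preadditive ℬ]
  [HasZeroObject 𝒜] [HasZeroObject ℬ] {c : ComplexShape ι} {c' : ComplexShape ι'}
  (Ψ : 𝒜 ⥤ ℬ) [Ψ.Additive] (K : HomologicalComplex 𝒜 c)

/-- The components of `mapExtendIso`; the index `none` stands for the degrees outside the image of
the embedding, where the extended complex is zero. -/
noncomputable def mapExtendXIso : ∀ i : Option ι,
    Ψ.obj (extend.X K i) ≅ extend.X ((Ψ.mapHomologicalComplex c).obj K) i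
  | some _ => Iso.refl _
  | none => Ψ.mapZeroObject

theorem mapExtendXIso_hom_comp_d (i j : Option ι) :
    (mapExtendXIso Ψ K i).hom ≫ extend.d ((Ψ.mapHomologicalComplex c).obj K) i j =
      Ψ.map (extend.d K i j) ≫ (mapExtendXIso Ψ K j).hom :=
  match i, j with
  | some _, some _ => (Category.id_comp _).trans (Category.comp_id _).symm
  | none, _ => (Ψ.map_isZero (isZero_zero 𝒜)).eq_of_src _ _
  | some _, none => (isZero_zero ℬ).eq_of_tgt _ _

/-- Additive functors commute with extension of complexes along an embedding. -/
noncomputable def mapExtendIso (e : c.Embedding c') :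
    (Ψ.mapHomologicalComplex c').obj (K.extend e) ≅
      ((Ψ.mapHomologicalComplex c).obj K).extend e :=
  Hom.isoOfComponents (fun _ ↦ mapExtendXIso Ψ K _) fun _ _ _ ↦ mapExtendXIso_hom_comp_d Ψ K _ _

end MapExtend

variable {𝒜 ℬ : Type*} [Category* 𝒜] [Category* ℬ] [Abelian 𝒜] [Abelian ℬ]
  {X : 𝒜} (P : ProjectiveResolution X)

/-- The homology in degree `0` of a projective resolution is the resolved object. -/
noncomputable def homologyCochainComplexIso : P.cochainComplex.homology 0 ≅ X :=
  isoOfQuasiIsoAt P.π' 0 ≪≫ (HomologicalComplex.homologyFunctorSingleIso 𝒜 _ 0).app X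

/-- A projective resolution represents the resolved object in the derived category. -/
noncomputable def cochainComplexIsoSingle [HasDerivedCategory 𝒜] :
    DerivedCategory.Q.obj P.cochainComplex ≅ (DerivedCategory.singleFunctor 𝒜 0).obj X :=
  have : IsIso (DerivedCategory.Q.map P.π') :=
    Localization.inverts DerivedCategory.Q (HomologicalComplex.quasiIso _ _) _
      (by rw [HomologicalComplex.mem_quasiIso_iff]; infer_instance)
  asIso (DerivedCategory.Q.map P.π') ≪≫ ((DerivedCategory.singleFunctorIsoCompQ _ 0).app _).symm

theorem isZero_homology_cochainComplex {n : ℤ} (hn : n ≠ 0) :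
    IsZero (P.cochainComplex.homology n) :=
  ((HomologicalComplex.exactAt_single_obj (ComplexShape.up ℤ) 0 X n hn).isZero_homology).of_iso
    (isoOfQuasiIsoAt P.π' n)

variable (Ψ : 𝒜 ⥤ ℬ) [Ψ.Additive]

/-- The homology of `Ψ(P)`, for a projective resolution `P` of `X` indexed by `ℤ` and concentrated
in nonpositive degrees, computes the left derived functors of `Ψ`. -/
noncomputable def homologyMapCochainComplexIso [HasProjectiveResolutions 𝒜] (n : ℕ) :
    ((Ψ.mapHomologicalComplex _).obj P.cochainComplex).homology (-n : ℤ) ≅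
      (Ψ.leftDerived n).obj X :=
  (homologyFunctor _ _ _).mapIso (mapExtendIso Ψ P.complex _) ≪≫
    extendHomologyIso _ ComplexShape.embeddingDownNat rfl ≪≫ (P.isoLeftDerivedObj Ψ n).symm

theorem nonempty_iso_singleFunctor_of_isZero_leftDerived [HasProjectiveResolutions 𝒜]
    [HasDerivedCategory ℬ] [PreservesFiniteColimits Ψ]
    (h : ∀ n, 0 < n → IsZero ((Ψ.leftDerived n).obj X)) :
    Nonempty (DerivedCategory.Q.obj ((Ψ.mapHomologicalComplex _).obj P.cochainComplex) ≅
      (DerivedCategory.singleFunctor ℬ 0).obj (Ψ.obj X)) := by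
  have : (DerivedCategory.Q.obj ((Ψ.mapHomologicalComplex _).obj P.cochainComplex)).IsGE 0 := by
    rw [DerivedCategory.isGE_Q_obj_iff, CochainComplex.isGE_iff]
    intro i hi
    obtain ⟨n, rfl⟩ : ∃ n : ℕ, i = -n := ⟨i.natAbs, by lia⟩
    rw [exactAt_iff_isZero_homology]
    exact (h n (by lia)).of_iso (homologyMapCochainComplexIso P Ψ n)
  have : (DerivedCategory.Q.obj ((Ψ.mapHomologicalComplex _).obj P.cochainComplex)).IsLE 0 :=
    (DerivedCategory.isLE_Q_obj_iff _ _).mpr inferInstance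
  obtain ⟨e⟩ := nonempty_iso_singleFunctor_homologyFunctor
    (DerivedCategory.Q.obj ((Ψ.mapHomologicalComplex _).obj P.cochainComplex)) 0
  exact ⟨e ≪≫ (DerivedCategory.singleFunctor ℬ 0).mapIso
    ((DerivedCategory.homologyFunctorFactors ℬ 0).app _ ≪≫
      homologyMapCochainComplexIso P Ψ 0 ≪≫ Ψ.leftDerivedZeroIsoSelf.app X)⟩

theorem nonempty_iso_singleFunctor_of_projective [EnoughProjectives 𝒜]
    [HasDerivedCategory ℬ] [PreservesFiniteColimits Ψ] [Projective X] :
    Nonempty (DerivedCategory.Q.obj ((Ψ.mapHomologicalComplex _).obj P.cochainComplex) ≅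
      (DerivedCategory.singleFunctor ℬ 0).obj (Ψ.obj X)) :=
  nonempty_iso_singleFunctor_of_isZero_leftDerived P Ψ fun
    | n + 1, _ => Functor.isZero_leftDerived_obj_projective_succ Ψ n X

end ProjectiveResolution

section KProjective

open DerivedCategory (Qh singleFunctor)

attribute [local instance] HasDerivedCategory.standard

/-- The homotopy category `K(R)` of complexes of `R`-modules. -/
abbrev KCat (R : Type u) [CommRing R] := HomotopyCategory (ModuleCat.{u} R) (ComplexShape.up ℤ)

/-- The derived category `D(R)` of complexes of `R`-modules. -/
abbrev DCat (R : Type u) [CommRing R] := DerivedCategory (ModuleCat.{u} R)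

/-- The class of K-projective complexes of modules, as objects of the homotopy category. -/
abbrev kProjective (R : Type u) [CommRing R] : ObjectProperty (KCat R) :=
  (HomotopyCategory.subcategoryAcyclic _).leftOrthogonal

variable {R : Type u} [CommRing R]

theorem kProjective.bijective_Qh_map {X : KCat R} (hX : kProjective R X) (Y : KCat R) :
    Function.Bijective (Qh.map : (X ⟶ Y) → _) :=
  hX.map_bijective_of_isTriangulated _ _

theorem kProjective_quotient_obj (K : CochainComplex (ModuleCat.{u} R) ℤ)
    [∀ n, Projective (K.X n)] (n : ℤ) [K.IsStrictlyLE n] :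
    kProjective R ((HomotopyCategory.quotient _ _).obj K) :=
  have := CochainComplex.isKProjective_of_projective K n
  CochainComplex.IsKProjective.leftOrthogonal K

variable (𝒞 : ObjectProperty (KCat R))

/-- The image in `D(R)` of the K-projective complexes belonging to `𝒞`. It serves to speak about a
property of complexes on which a functor is not yet known to be invariant under
quasi-isomorphisms. -/
abbrev kProjectiveImage : ObjectProperty (DCat R) := (kProjective R ⊓ 𝒞).map Qh

instance [𝒞.IsTriangulated] : (kProjectiveImage 𝒞).IsTriangulated :=
  isTriangulated_map_of_surjective Qh _ fun _ Y hX _ ↦ (hX.1.bijective_Qh_map Y).surjective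

variable {𝒞} in
theorem prop_of_kProjectiveImage [𝒞.IsClosedUnderIsomorphisms] {X : KCat R}
    (hX : kProjective R X) (h : kProjectiveImage 𝒞 (Qh.obj X)) : 𝒞 X := by
  obtain ⟨Y, ⟨hY, hY'⟩, ⟨e⟩⟩ := h
  obtain ⟨f, hf⟩ := (hY.bijective_Qh_map X).surjective e.hom
  obtain ⟨g, hg⟩ := (hX.bijective_Qh_map Y).surjective e.inv
  exact 𝒞.prop_of_iso ⟨f, g, (hY.bijective_Qh_map Y).injective (by simp [hf, hg]),
    (hX.bijective_Qh_map X).injective (by simp [hf, hg])⟩ hY'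

end KProjective

section KoszulResolution

open DerivedCategory (Qh singleFunctor)
open Pretriangulated RingTheory.Sequence
open scoped Pointwise

attribute [local instance] HasDerivedCategory.standard

theorem ker_eq_ofList_smul_top_of_comp_mkQ {Q B E : Type*} [CommRing Q] [AddCommGroup B]
    [Module Q B] [AddCommGroup E] [Module Q E] {x : Q} {xs : List Q} {p : QuotSMulTop x B →ₗ[Q] E}
    (hker : LinearMap.ker (p ∘ₗ (x • ⊤ : Submodule Q B).mkQ) = Ideal.ofList (x :: xs) • ⊤) :
    LinearMap.ker p = Ideal.ofList xs • ⊤ := by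
  have hx : Ideal.span {x} • (⊤ : Submodule Q (QuotSMulTop x B)) = ⊥ := by
    rw [Submodule.ideal_span_singleton_smul, eq_bot_iff]
    rintro _ ⟨b, -, rfl⟩
    obtain ⟨b, rfl⟩ := Submodule.mkQ_surjective _ b
    exact (Submodule.Quotient.mk_eq_zero _).mpr (Submodule.smul_mem_pointwise_smul b x ⊤ trivial)
  rw [← Submodule.map_comap_eq_of_surjective (Submodule.mkQ_surjective _) (LinearMap.ker p),
    ← LinearMap.ker_comp, hker, Submodule.map_smul'', Submodule.map_top, Submodule.range_mkQ,
    Ideal.ofList_cons, Submodule.sup_smul, hx, bot_sup_eq]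

variable {Q : Type u} [CommRing Q]

theorem IsKoszul.isIso_desc {xs : List Q} {B E : ModuleCat.{u} Q} (hxs : IsWeaklyRegular B xs)
    {p : B ⟶ E} (hp : Function.Surjective p) (hker : LinearMap.ker p.hom = Ideal.ofList xs • ⊤)
    {X X' : DCat Q} {j : X ⟶ X'} (hj : IsKoszul xs j)
    (e : (singleFunctor _ 0).obj B ≅ X)
    {p' : X' ⟶ (singleFunctor _ 0).obj E}
    (hp' : e.hom ≫ j ≫ p' = (singleFunctor _ 0).map p) : IsIso p' := by
  induction hj generalizing B with
  | nil X =>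
    have : IsIso p := (ConcreteCategory.isIso_iff_bijective p).mpr
      ⟨LinearMap.ker_eq_bot.mp (by simpa using hker), hp⟩
    have : IsIso (e.hom ≫ 𝟙 X ≫ p') := hp' ▸ inferInstance
    rwa [Category.id_comp, isIso_comp_left_iff] at this
  | @cons x xs X X₁ X' i δ j hT _ ih =>
    obtain ⟨hx, hxs⟩ := (isWeaklyRegular_cons_iff _ _ _).mp hxs
    let π : B ⟶ .of Q (QuotSMulTop x B) := ModuleCat.ofHom (x • ⊤ : Submodule Q B).mkQ
    obtain ⟨e₁, he₁⟩ : ∃ e₁ : (singleFunctor _ 0).obj (.of Q (QuotSMulTop x B)) ≅ X₁,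
        (singleFunctor _ 0).map π ≫ e₁.hom = e.hom ≫ i := by
      let t := isoTriangleOfIso₁₂ _ _ hx.smulShortComplex_shortExact.singleTriangle_distinguished
        hT e e (by
          change (singleFunctor _ 0).map (x • 𝟙 B) ≫ e.hom = e.hom ≫ (x • 𝟙 X)
          simp [CategoryTheory.Functor.map_smul])
      exact ⟨Triangle.π₃.mapIso t, t.hom.comm₂⟩
    obtain ⟨p₁, hp₁⟩ := (singleFunctor _ 0).map_surjective (e₁.hom ≫ j ≫ p')
    have hπ : π ≫ p₁ = p := (singleFunctor _ 0).map_injective (by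
      rw [CategoryTheory.Functor.map_comp, hp₁, reassoc_of% he₁, ← hp', Category.assoc])
    subst hπ
    exact ih hxs (Function.Surjective.of_comp (g := π) hp)
      (ker_eq_ofList_smul_top_of_comp_mkQ hker) e₁ hp₁.symm

theorem smul_id_quotient_eq_zero {I : Ideal Q} {x : Q} (hx : x ∈ I) :
    x • 𝟙 (ModuleCat.of Q (Q ⧸ I)) = 0 := by
  refine ModuleCat.hom_ext (LinearMap.ext fun a ↦ ?_)
  obtain ⟨a, rfl⟩ := I.mkQ_surjective a
  exact (Submodule.Quotient.mk_eq_zero I).mpr (I.mul_mem_right a hx)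

theorem nonempty_retract_of_isKoszul {xs : List Q} (hxs : IsWeaklyRegular Q xs)
    {N : ModuleCat.{u} Q} {p : N ⟶ .of Q (Q ⧸ Ideal.ofList xs)} (hp : Function.Surjective p)
    {A A' F F' : KCat Q} {i : A ⟶ A'} {j : F ⟶ F'} (hi : IsKoszul xs i) (hj : IsKoszul xs j)
    (hA : kProjective Q A) (hF : kProjective Q F)
    (eA : Qh.obj A ≅ (singleFunctor _ 0).obj (.of Q Q))
    (eF : Qh.obj F ≅ (singleFunctor _ 0).obj N) :
    Nonempty (Retract A' F') := by
  let E : ModuleCat.{u} Q := .of Q (Q ⧸ Ideal.ofList xs)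
  let single : ModuleCat.{u} Q ⥤ DCat Q := singleFunctor _ 0
  obtain ⟨y, hy⟩ := hp 1
  let g : ModuleCat.of Q Q ⟶ N := ModuleCat.ofHom (LinearMap.toSpanSingleton Q N y)
  let π : ModuleCat.of Q Q ⟶ E := ModuleCat.ofHom (Ideal.ofList xs).mkQ
  have hgp : g ≫ p = π := by
    ext
    simpa [g, π] using hy
  obtain ⟨f, hf⟩ := (hA.bijective_Qh_map F).surjective (eA.hom ≫ single.map g ≫ eF.inv)
  obtain ⟨f', hf'⟩ := hi.exists_map hj f
  have hE : ∀ x ∈ xs, x • 𝟙 (single.obj E) = 0 := fun x hx ↦ by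
    rw [← single.map_id, ← single.map_smul,
      smul_id_quotient_eq_zero (I := .ofList xs) (Ideal.subset_span hx), single.map_zero]
  obtain ⟨q, hq⟩ := IsKoszul.exists_desc (hj.map_of_linear Qh) hE (eF.hom ≫ single.map p)
  have hiso : IsIso (Qh.map f' ≫ q) :=
    IsKoszul.isIso_desc (p := π) hxs (Submodule.mkQ_surjective _)
      (by rw [ModuleCat.hom_ofHom, Submodule.ker_mkQ, smul_eq_mul, Ideal.mul_top])
      (hi.map_of_linear Qh) eA.symm (by
        rw [← hgp, ← Functor.map_comp_assoc, hf', Functor.map_comp_assoc, hq, hf]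
        simp [single])
  have hA' : kProjective Q A' := hi.prop _ hA
  have hF' : kProjective Q F' := hj.prop _ hF
  obtain ⟨r, hr⟩ := (hF'.bijective_Qh_map A').surjective (q ≫ inv (Qh.map f' ≫ q))
  exact ⟨f', r, (hA'.bijective_Qh_map A').injective
    (by rw [Qh.map_comp, hr, ← Category.assoc, IsIso.hom_inv_id, Qh.map_id])⟩

end KoszulResolution

section ShortExactHomology

open HomologicalComplex

variable {𝒜 ι : Type*} [Category* 𝒜] [Abelian 𝒜] {c : ComplexShape ι}
  {C : ShortComplex (HomologicalComplex 𝒜 c)} (hC : C.ShortExact) {i j : ι} (hij : c.Rel i j)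

include hC hij in
theorem isIso_homologyMap_g (hf : homologyMap C.f i = 0) (hj : IsZero (C.X₁.homology j)) :
    IsIso (homologyMap C.g i) :=
  have := (hC.homology_exact₂ i).mono_g hf
  have := (hC.homology_exact₃ i j hij).epi_f (hj.eq_of_tgt _ _)
  isIso_of_mono_of_epi _

theorem isIso_δ_of_isZero (hf : homologyMap C.f j = 0) (hi : IsZero (C.X₂.homology i)) :
    IsIso (hC.δ i j hij) :=
  have := hC.mono_δ i j hij hi
  have := (hC.homology_exact₁ i j hij).epi_f hf
  isIso_of_mono_of_epi _

end ShortExactHomology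

section BaseChange

open ModuleCat DerivedCategory

attribute [local instance] HasDerivedCategory.standard

variable {S : Type u} [CommRing S] (x : S)

/-- The quotient map `S ⟶ S ⧸ x`. -/
abbrev modOut : S →+* S ⧸ Ideal.span {x} := Ideal.Quotient.mk _

theorem smul_id_comp_unit_app_eq_zero (P : ModuleCat.{u} S) :
    (x • 𝟙 P : P ⟶ P) ≫ (extendRestrictScalarsAdj (modOut x)).unit.app P = 0 := by
  refine ModuleCat.hom_ext (LinearMap.ext fun p ↦ ?_)
  have h : x • p ∈ (Ideal.span {x} • ⊤ : Submodule S P) :=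
    Submodule.smul_mem_smul (Ideal.mem_span_singleton_self x) trivial
  rwa [← LinearMap.ker_tensorProductMk] at h

/-- The sequence of complexes `K ⟶ K ⟶ (S ⧸ x) ⊗ K` given by multiplication by `x`. -/
noncomputable abbrev modOutShortComplex (K : CochainComplex (ModuleCat.{u} S) ℤ) :
    ShortComplex (CochainComplex (ModuleCat.{u} S) ℤ) :=
  .mk (x • 𝟙 K) ((NatTrans.mapHomologicalComplex
    (extendRestrictScalarsAdj (modOut x)).unit (ComplexShape.up ℤ)).app K) <|
    HomologicalComplex.hom_ext _ _ fun n ↦ smul_id_comp_unit_app_eq_zero x (K.X n)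

variable {x}

theorem shortExact_unit_app (hx : IsSMulRegular S x) (P : ModuleCat.{u} S) [Module.Flat S P] :
    (ShortComplex.mk _ _ (smul_id_comp_unit_app_eq_zero x P)).ShortExact where
  exact := by
    refine (ShortComplex.moduleCat_exact_iff _).mpr fun p hp ↦ ?_
    have h : p ∈ LinearMap.ker (TensorProduct.mk S (S ⧸ Ideal.span {x}) P 1) := hp
    rw [LinearMap.ker_tensorProductMk, Submodule.ideal_span_singleton_smul] at h
    obtain ⟨p', -, hp'⟩ := h
    exact ⟨p', hp'⟩
  mono_f := (ModuleCat.mono_iff_injective _).mpr (Module.Flat.isSMulRegular_of_isRegular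
    (isLeftRegular_iff_isRegular.mp (isLeftRegular_iff.mpr hx)))
  epi_g := (ModuleCat.epi_iff_surjective _).mpr
    (TensorProduct.mk_surjective S P (S ⧸ Ideal.span {x}) Ideal.Quotient.mk_surjective)

theorem shortExact_modOutShortComplex (hx : IsSMulRegular S x)
    (K : CochainComplex (ModuleCat.{u} S) ℤ) [∀ n, Module.Flat S (K.X n)] :
    (modOutShortComplex x K).ShortExact :=
  HomologicalComplex.shortExact_of_degreewise_shortExact _ fun n ↦ shortExact_unit_app hx (K.X n)

theorem homologyMap_smul_id_eq_zero {𝒜 ι : Type*} [Category* 𝒜] [Preadditive 𝒜] [Linear S 𝒜]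
    [CategoryWithHomology 𝒜] {c : ComplexShape ι} {K : HomologicalComplex 𝒜 c} {n : ι}
    (h : x • 𝟙 (K.homology n) = 0) : HomologicalComplex.homologyMap (x • 𝟙 K) n = 0 := by
  rw [← h, ← HomologicalComplex.homologyMap_id]
  exact ShortComplex.homologyMap_smul (𝟙 (K.sc n)) x

instance full_restrictScalars_modOut : (restrictScalars.{u} (modOut x)).Full where
  map_surjective {X Y} f := ⟨ModuleCat.ofHom
    { toFun := f.hom
      map_add' := f.hom.map_add
      map_smul' := by
        intro a
        obtain ⟨a, rfl⟩ := Ideal.Quotient.mk_surjective a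
        exact f.hom.map_smul a }, rfl⟩

/-- Restriction of scalars along `S ⟶ S ⧸ x` commutes with homology. -/
noncomputable def homologyRestrictScalarsIso
    (K : CochainComplex (ModuleCat.{u} (S ⧸ Ideal.span {x})) ℤ) (n : ℤ) :
    (((restrictScalars (modOut x)).mapHomologicalComplex _).obj K).homology n ≅
      (restrictScalars (modOut x)).obj (K.homology n) :=
  (K.sc n).mapHomologyIso (restrictScalars (modOut x))

variable (x) in
theorem smul_id_restrictScalars_obj (N : ModuleCat.{u} (S ⧸ Ideal.span {x})) :
    x • 𝟙 ((restrictScalars (modOut x)).obj N) = 0 := by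
  refine ModuleCat.hom_ext (LinearMap.ext fun a ↦ ?_)
  change modOut x x • (show N from a) = 0
  rw [Ideal.Quotient.mk_singleton_self, zero_smul]

section FlatComplex

variable (hx : IsSMulRegular S x) {K : CochainComplex (ModuleCat.{u} S) ℤ}
  [∀ n, Module.Flat S (K.X n)] (hK : ∀ n, n ≠ 0 → IsZero (K.homology n))

include hx hK

theorem isZero_homology_mapHomologicalComplex_extendScalars {n : ℤ} (h₀ : n ≠ 0) (h₁ : n ≠ -1) :
    IsZero ((((extendScalars (modOut x)).mapHomologicalComplex _).obj K).homology n) := by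
  have hX₃ : IsZero ((modOutShortComplex x K).X₃.homology n) :=
    ((shortExact_modOutShortComplex hx K).homology_exact₃ n (n + 1) rfl).isZero_X₂
      ((hK n h₀).eq_of_src _ _) ((hK (n + 1) (by lia)).eq_of_tgt _ _)
  exact IsZero.of_full_of_faithful_of_isZero (restrictScalars (modOut x)) _
    (hX₃.of_iso (homologyRestrictScalarsIso _ n).symm)

theorem prop_homology_mapHomologicalComplex_extendScalars
    {N : ModuleCat.{u} (S ⧸ Ideal.span {x})}
    (e : K.homology 0 ≅ (restrictScalars (modOut x)).obj N)
    (P : ObjectProperty (ModuleCat.{u} (S ⧸ Ideal.span {x}))) [P.IsClosedUnderIsomorphisms]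
    [P.ContainsZero] (hN : P N) (n : ℤ) :
    P ((((extendScalars (modOut x)).mapHomologicalComplex _).obj K).homology n) := by
  have hC := shortExact_modOutShortComplex hx K
  have hzero : HomologicalComplex.homologyMap (x • 𝟙 K) 0 = 0 := by
    refine homologyMap_smul_id_eq_zero ?_
    rw [← e.hom_inv_id, ← Category.id_comp e.inv, ← Linear.comp_smul, ← Linear.smul_comp,
      smul_id_restrictScalars_obj, zero_comp, comp_zero]
  have prop_of_iso (i : K.homology 0 ≅ (modOutShortComplex x K).X₃.homology n) :=
    P.prop_of_iso ((restrictScalars (modOut x)).preimageIso (e.symm ≪≫ i ≪≫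
      homologyRestrictScalarsIso (((extendScalars (modOut x)).mapHomologicalComplex _).obj K) n)) hN
  by_cases h₀ : n = 0
  · subst h₀
    have := isIso_homologyMap_g hC (j := 1) (by simp) hzero (hK 1 one_ne_zero)
    exact prop_of_iso (asIso (HomologicalComplex.homologyMap (modOutShortComplex x K).g 0))
  by_cases h₁ : n = -1
  · subst h₁
    have := isIso_δ_of_isZero hC (i := -1) (j := 0) (by simp) hzero (hK _ (by lia))
    exact prop_of_iso (asIso (hC.δ (-1) 0 _)).symm
  · exact P.prop_of_isZero (isZero_homology_mapHomologicalComplex_extendScalars hx hK h₀ h₁)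

end FlatComplex

variable {T : Type u} [CommRing T]

instance (φ : S →+* T) (P : ModuleCat.{u} S) [Projective P] :
    Projective ((extendScalars φ).obj P) :=
  (extendRestrictScalarsAdj φ).map_projective P inferInstance

instance (φ : S →+* T) : (extendScalars.{u, u, u} φ).Additive :=
  (extendRestrictScalarsAdj φ).left_adjoint_additive

/-- The complex computing the derived base change of a module `N` along `φ`. -/
noncomputable abbrev derivedExtendScalars (φ : S →+* T) (N : ModuleCat.{u} S) :
    CochainComplex (ModuleCat.{u} T) ℤ :=
  ((extendScalars φ).mapHomologicalComplex (.up ℤ)).obj (projectiveResolution N).cochainComplex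

theorem kProjectiveImage_inverseImage_of_homology (φ : S →+* T) (𝒞 : ObjectProperty (KCat T))
    [𝒞.IsTriangulated] [𝒞.IsClosedUnderIsomorphisms] (N : ModuleCat.{u} S) (a : ℤ)
    (ha : ∀ n < a, IsZero ((derivedExtendScalars φ N).homology n))
    (h𝒞 : ∀ n, kProjectiveImage 𝒞
      ((singleFunctor _ 0).obj ((derivedExtendScalars φ N).homology n))) :
    kProjectiveImage (𝒞.inverseImage ((extendScalars φ).mapHomotopyCategory _))
      ((singleFunctor _ 0).obj N) := by
  let K := derivedExtendScalars φ N
  have (n : ℤ) : Projective (K.X n) := inferInstanceAs (Projective ((extendScalars φ).obj _))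
  have : (Q.obj K).IsGE a := by
    rw [isGE_Q_obj_iff, CochainComplex.isGE_iff]
    exact fun n hn ↦ (HomologicalComplex.exactAt_iff_isZero_homology _ _).mpr (ha n hn)
  have : (Q.obj K).IsLE 0 := (isLE_Q_obj_iff _ _).mpr inferInstance
  have hK : 𝒞 ((HomotopyCategory.quotient _ _).obj K) :=
    prop_of_kProjectiveImage (kProjective_quotient_obj K 0) <|
      prop_of_forall_prop_single_homology (X := Q.obj K) (a := a) (b := 0) _ fun n ↦
        ObjectProperty.prop_of_iso _
          ((singleFunctor _ 0).mapIso ((homologyFunctorFactors _ n).app K).symm) (h𝒞 n)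
  exact ⟨(HomotopyCategory.quotient _ _).obj (projectiveResolution N).cochainComplex,
    ⟨kProjective_quotient_obj _ 0, hK⟩, ⟨cochainComplexIsoSingle _⟩⟩

theorem kProjectiveImage_inverseImage_of_isSMulRegular (hx : IsSMulRegular S x)
    (𝒞 : ObjectProperty (KCat (S ⧸ Ideal.span {x}))) [𝒞.IsTriangulated]
    [𝒞.IsClosedUnderIsomorphisms] {N : ModuleCat.{u} (S ⧸ Ideal.span {x})}
    (hN : kProjectiveImage 𝒞 ((singleFunctor _ 0).obj N)) :
    kProjectiveImage (𝒞.inverseImage ((extendScalars (modOut x)).mapHomotopyCategory _))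
      ((singleFunctor _ 0).obj ((restrictScalars (modOut x)).obj N)) := by
  let P := projectiveResolution ((restrictScalars (modOut x)).obj N)
  have (n : ℤ) : Module.Flat S (P.cochainComplex.X n) :=
    have : Module.Projective S (P.cochainComplex.X n) :=
      (IsProjective.iff_projective _).mpr (inferInstanceAs (Projective (P.cochainComplex.X n)))
    inferInstance
  have hP (n : ℤ) : n ≠ 0 → IsZero (P.cochainComplex.homology n) := isZero_homology_cochainComplex P
  exact kProjectiveImage_inverseImage_of_homology (modOut x) 𝒞 _ (-1)
    (fun n hn ↦ isZero_homology_mapHomologicalComplex_extendScalars hx hP (by lia) (by lia))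
    (prop_homology_mapHomologicalComplex_extendScalars hx hP (homologyCochainComplexIso P)
      ((kProjectiveImage 𝒞).inverseImage (singleFunctor _ 0)) hN)

theorem kProjectiveImage_inverseImage_of_bijective {φ : S →+* T} (hφ : Function.Bijective φ)
    (𝒞 : ObjectProperty (KCat T)) [𝒞.IsTriangulated] [𝒞.IsClosedUnderIsomorphisms]
    {N : ModuleCat.{u} T}
    (hN : kProjectiveImage 𝒞 ((singleFunctor _ 0).obj N)) :
    kProjectiveImage (𝒞.inverseImage ((extendScalars φ).mapHomotopyCategory _))
      ((singleFunctor _ 0).obj ((restrictScalars φ).obj N)) := by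
  let P := projectiveResolution ((restrictScalars φ).obj N)
  have : (restrictScalars.{u} φ).IsEquivalence :=
    restrictScalars_isEquivalence_of_ringEquiv (RingEquiv.ofBijective φ hφ)
  have : (extendScalars.{u, u, u} φ).IsEquivalence :=
    (extendRestrictScalarsAdj φ).isEquivalence_left_of_isEquivalence_right
  let e (n : ℤ) : (derivedExtendScalars φ _).homology n ≅
      (extendScalars φ).obj (P.cochainComplex.homology n) :=
    (P.cochainComplex.sc n).mapHomologyIso (extendScalars φ)
  have hzero {n : ℤ} (hn : n ≠ 0) : IsZero ((derivedExtendScalars φ _).homology n) :=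
    ((extendScalars φ).map_isZero (isZero_homology_cochainComplex P hn)).of_iso (e n)
  refine kProjectiveImage_inverseImage_of_homology φ 𝒞 _ 0 (fun n hn ↦ hzero hn.ne) fun n ↦ ?_
  obtain rfl | hn := eq_or_ne n 0
  · refine ObjectProperty.prop_of_iso _ ((singleFunctor _ 0).mapIso ?_) hN
    exact (asIso ((extendRestrictScalarsAdj φ).counit.app N)).symm ≪≫
      (extendScalars φ).mapIso (homologyCochainComplexIso P).symm ≪≫ (e 0).symm
  · exact ObjectProperty.prop_of_isZero _ ((singleFunctor _ 0).map_isZero (hzero hn))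

theorem kProjectiveImage_inverseImage_comp {U : Type u} [CommRing U] {φ : S →+* T}
    {ψ : T →+* U} (𝒞 : ObjectProperty (KCat U)) [𝒞.IsClosedUnderIsomorphisms] {N : ModuleCat.{u} U}
    (hN : kProjectiveImage ((𝒞.inverseImage ((extendScalars ψ).mapHomotopyCategory _)).inverseImage
      ((extendScalars φ).mapHomotopyCategory _))
      ((singleFunctor _ 0).obj ((restrictScalars φ).obj ((restrictScalars ψ).obj N)))) :
    kProjectiveImage (𝒞.inverseImage ((extendScalars (ψ.comp φ)).mapHomotopyCategory _))
      ((singleFunctor _ 0).obj ((restrictScalars (ψ.comp φ)).obj N)) := by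
  obtain ⟨F, ⟨hF, hF'⟩, ⟨e⟩⟩ := hN
  exact ⟨F, ⟨hF, 𝒞.prop_of_iso ((HomotopyCategory.quotient _ _).mapIso
    ((NatIso.mapHomologicalComplex (extendScalarsComp φ ψ) _).app F.as)).symm hF'⟩, ⟨e⟩⟩

theorem kProjectiveImage_inverseImage_of_isWeaklyRegular {fs : List S}
    (hfs : RingTheory.Sequence.IsWeaklyRegular S fs) {φ : S →+* T} (hφ : Function.Surjective φ)
    (hker : RingHom.ker φ = Ideal.ofList fs)
    (𝒞 : ObjectProperty (KCat T)) [𝒞.IsTriangulated] [𝒞.IsClosedUnderIsomorphisms]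
    {N : ModuleCat.{u} T}
    (hN : kProjectiveImage 𝒞 ((singleFunctor _ 0).obj N)) :
    kProjectiveImage (𝒞.inverseImage ((extendScalars φ).mapHomotopyCategory _))
      ((singleFunctor _ 0).obj ((restrictScalars φ).obj N)) := by
  generalize hn : fs.length = n
  induction n generalizing S fs with
  | zero =>
    obtain rfl := List.length_eq_zero_iff.mp hn
    exact kProjectiveImage_inverseImage_of_bijective
      ⟨(RingHom.injective_iff_ker_eq_bot φ).mpr (hker.trans Ideal.ofList_nil), hφ⟩ 𝒞 hN
  | succ n ih =>
    obtain ⟨x, fs, rfl⟩ := List.exists_cons_of_length_eq_add_one hn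
    obtain ⟨hx, hfs⟩ := (isWeaklyRegular_cons_iff_quotient _ _).mp hfs
    have hle : Ideal.span {x} ≤ RingHom.ker φ := by
      rw [hker, Ideal.ofList_cons]; exact le_sup_left
    let φ₁ : S ⧸ Ideal.span {x} →+* T := Ideal.Quotient.lift _ φ hle
    have hφ₁ : φ₁.comp (modOut x) = φ := Ideal.Quotient.lift_comp_mk _ _ _
    rw [← hφ₁]
    refine kProjectiveImage_inverseImage_comp 𝒞 (kProjectiveImage_inverseImage_of_isSMulRegular hx
      (𝒞.inverseImage ((extendScalars φ₁).mapHomotopyCategory _)) (ih hfs ?_ ?_ ?_))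
    · exact Ideal.Quotient.lift_surjective_of_surjective _ _ hφ
    · refine Ideal.comap_injective_of_surjective _ Ideal.Quotient.mk_surjective ?_
      rw [RingHom.comap_ker, hφ₁, hker, ofList_cons_eq_comap]
    · simpa using hn

end BaseChange

section ExtComparison

open Opposite DerivedCategory

variable {R : Type u} [CommRing R]

theorem isZero_Ext_succ_iff_subsingleton {𝒜 : Type*} [Category* 𝒜] [Abelian 𝒜] [Linear R 𝒜]
    [EnoughProjectives 𝒜] [HasExt 𝒜] (L X : 𝒜) (n : ℕ) :
    IsZero (((Ext R 𝒜 (n + 1)).obj (op L)).obj X) ↔ Subsingleton (Abelian.Ext L X (n + 1)) := by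
  let P := projectiveResolution L
  rw [(P.isoExt (n + 1) X).isZero_iff, ← HomologicalComplex.exactAt_iff_isZero_homology,
    HomologicalComplex.exactAt_iff' _ n (n + 1) (n + 1 + 1) (by simp) (by simp),
    ShortComplex.moduleCat_exact_iff]
  constructor
  · refine fun h ↦ subsingleton_of_forall_eq 0 fun x ↦ ?_
    obtain ⟨f, hf, rfl⟩ := P.extMk_surjective x (n + 1 + 1) rfl
    exact (P.extMk_eq_zero_iff f _ rfl hf n rfl).mpr (h f hf)
  · exact fun h f hf ↦ (P.extMk_eq_zero_iff f _ rfl hf n rfl).mp (Subsingleton.elim _ _)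

attribute [local instance] HasDerivedCategory.standard

variable (L X : ModuleCat.{u} R)

theorem isZero_Ext_succ_iff_isZero_hom (n : ℕ) :
    IsZero (((Ext R (ModuleCat.{u} R) (n + 1)).obj (op L)).obj X) ↔
      IsZero (ModuleCat.of R ((singleFunctor _ 0).obj L ⟶
        ((singleFunctor _ 0).obj X)⟦((n + 1 : ℕ) : ℤ)⟧)) := by
  rw [isZero_Ext_succ_iff_subsingleton, ModuleCat.isZero_iff_subsingleton]
  exact (Abelian.Ext.homLinearEquiv (R := R)).toEquiv.subsingleton_congr

theorem eventuallyHom_isZero_singleFunctor_iff :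
    eventuallyHom (IsZero (C := ModuleCat R)) ((singleFunctor _ 0).obj L)
        ((singleFunctor _ 0).obj X) ↔
      ∃ n, ∀ i, n ≤ i → IsZero (((Ext R (ModuleCat.{u} R) i).obj (op L)).obj X) := by
  constructor
  · rintro ⟨n, hn⟩
    refine ⟨n.toNat + 1, fun i hi ↦ ?_⟩
    obtain ⟨i, rfl⟩ := Nat.exists_eq_add_one_of_ne_zero (by lia : i ≠ 0)
    exact (isZero_Ext_succ_iff_isZero_hom L X i).mpr (hn _ (by lia))
  · rintro ⟨n, hn⟩
    refine ⟨n + 1, fun i hi ↦ ?_⟩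
    obtain ⟨i, rfl⟩ : ∃ j : ℕ, i = ((j + 1 : ℕ) : ℤ) := ⟨i.toNat - 1, by lia⟩
    exact (isZero_Ext_succ_iff_isZero_hom L X i).mp (hn _ (by lia))

theorem eventuallyHom_noetherianModules_singleFunctor [IsNoetherianRing R]
    [Module.Finite R L] [Module.Finite R X] :
    eventuallyHom (noetherianModules R) ((singleFunctor _ 0).obj L)
      ((singleFunctor _ 0).obj X) := by
  refine ⟨0, fun i hi ↦ ?_⟩
  lift i to ℕ using hi
  exact isNoetherian_of_linearEquiv
    (Abelian.Ext.homLinearEquiv (R := R) (X := L) (Y := X) (n := i))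

end ExtComparison

section DerivedTensor

open DerivedCategory MonoidalCategory RingTheory.Sequence

attribute [local instance] HasDerivedCategory.standard

theorem exists_surjective_quotient_isMaximal {R : Type u} [CommRing R] {N : ModuleCat.{u} R}
    (I : Ideal R) [I.IsMaximal] (hN : I • (⊤ : Submodule R N) ≠ ⊤) :
    ∃ p : N ⟶ .of R (R ⧸ I), Function.Surjective p := by
  let := Ideal.Quotient.field I
  have : Nontrivial (N ⧸ (I • ⊤ : Submodule R N)) := Submodule.Quotient.nontrivial_iff.mpr hN
  obtain ⟨y, hy⟩ := exists_ne (0 : N ⧸ (I • ⊤ : Submodule R N))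
  obtain ⟨g, hg⟩ := Module.Projective.exists_dual_eq_one (R ⧸ I) hy
  have hg' : Function.Surjective g := fun c ↦ ⟨c • y, by rw [map_smul, hg, smul_eq_mul, mul_one]⟩
  exact ⟨ModuleCat.ofHom (g.restrictScalars R ∘ₗ Submodule.mkQ _),
    hg'.comp (Submodule.mkQ_surjective _)⟩

variable {Q R : Type u} [CommRing Q] [CommRing R]

theorem extendScalars_map_smul_id (φ : Q →+* R) (x : Q)
    (N : ModuleCat.{u} Q) :
    (ModuleCat.extendScalars φ).map (x • 𝟙 N) = φ x • 𝟙 ((ModuleCat.extendScalars φ).obj N) :=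
  let := φ.toAlgebra
  ModuleCat.ExtendScalars.hom_ext fun n ↦
    (TensorProduct.tmul_smul x (1 : R) n).trans (TensorProduct.smul_tmul' x (1 : R) n)

theorem smul_top_restrictScalars_obj_ne_top {φ : Q →+* R} {I : Ideal Q} {J : Ideal R}
    (hIJ : ∀ x ∈ I, φ x ∈ J) {N : ModuleCat.{u} R} (hN : J • (⊤ : Submodule R N) ≠ ⊤) :
    I • (⊤ : Submodule Q ((ModuleCat.restrictScalars φ).obj N)) ≠ ⊤ := by
  refine fun h ↦ hN (eq_top_iff.mpr fun n _ ↦ ?_)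
  let N' := (ModuleCat.restrictScalars φ).obj N
  exact Submodule.smul_induction_on (p := fun m : N' ↦ (show N from m) ∈ J • ⊤)
    (h.ge (Submodule.mem_top (x := (show N' from n))))
    (fun x hx m _ ↦ Submodule.smul_mem_smul (hIJ x hx) (Submodule.mem_top (x := (show N from m))))
    fun _ _ ↦ add_mem

/-- Base change sends the free module of rank one to the free module of rank one. -/
noncomputable def extendScalarsObjSelfIso (φ : Q →+* R) :
    (ModuleCat.extendScalars φ).obj (.of Q Q) ≅ .of R R :=
  let := φ.toAlgebra
  (TensorProduct.AlgebraTensorModule.rid Q R R).toModuleIso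

theorem extendScalars_mapHomotopyCategory_map_smul_id (φ : Q →+* R) (x : Q) (X : KCat Q) :
    ((ModuleCat.extendScalars φ).mapHomotopyCategory (.up ℤ)).map (x • 𝟙 X) =
      φ x • 𝟙 (((ModuleCat.extendScalars φ).mapHomotopyCategory _).obj X) :=
  congrArg (HomotopyCategory.quotient _ _).map (HomologicalComplex.hom_ext
    (((ModuleCat.extendScalars φ).mapHomologicalComplex (.up ℤ)).map (x • 𝟙 X.as)) (φ x • 𝟙 _)
    fun n ↦ extendScalars_map_smul_id φ x (X.as.X n))

/-- The derived tensor product `X ↦ M ⊗ᴸ X`, on K-projective complexes `X`. -/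
noncomputable abbrev tensorToDerived (M : ModuleCat.{u} R) : KCat R ⥤ DCat R :=
  (tensorLeft M).mapHomotopyCategory (.up ℤ) ⋙ Qh

theorem kProjectiveImage_inverseImage_tensorToDerived (𝒟 : ObjectProperty (DCat R))
    [𝒟.IsClosedUnderIsomorphisms] {M N : ModuleCat.{u} R}
    (htor : ∀ i, 0 < i → IsZero (((Tor (ModuleCat.{u} R) i).obj M).obj N))
    (h : 𝒟 ((singleFunctor _ 0).obj (M ⊗ N))) :
    kProjectiveImage (𝒟.inverseImage (tensorToDerived M)) ((singleFunctor _ 0).obj N) := by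
  obtain ⟨e⟩ := nonempty_iso_singleFunctor_of_isZero_leftDerived (projectiveResolution N)
    (tensorLeft M) htor
  exact ⟨(HomotopyCategory.quotient _ _).obj (projectiveResolution N).cochainComplex,
    ⟨kProjective_quotient_obj _ 0, 𝒟.prop_of_iso e.symm h⟩, ⟨cochainComplexIsoSingle _⟩⟩

variable {fs xs : List Q} {φ : Q →+* R}

theorem eventuallyHom_isZero_of_isWeaklyRegular [IsNoetherianRing R]
    (hfs : IsWeaklyRegular Q fs) (hφ : Function.Surjective φ)
    (hker : RingHom.ker φ = Ideal.ofList fs) (hxs : IsWeaklyRegular Q xs)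
    (hjac : ∀ x ∈ xs, φ x ∈ Ring.jacobson R)
    (M N L : ModuleCat.{u} R) [Module.Finite R M] [Module.Finite R L]
    {p : (ModuleCat.restrictScalars φ).obj N ⟶ .of Q (Q ⧸ Ideal.ofList xs)}
    (hp : Function.Surjective p)
    (htor : ∀ i, 0 < i → IsZero (((Tor (ModuleCat.{u} R) i).obj M).obj N))
    (hext : eventuallyHom (IsZero (C := ModuleCat R)) ((singleFunctor _ 0).obj L)
      ((singleFunctor _ 0).obj (M ⊗ N))) :
    eventuallyHom (IsZero (C := ModuleCat R)) ((singleFunctor _ 0).obj L)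
      ((singleFunctor _ 0).obj M) := by
  let 𝒟 := eventuallyHom (IsZero (C := ModuleCat R)) ((singleFunctor _ 0).obj L)
  let T : KCat Q ⥤ DCat R :=
    (ModuleCat.extendScalars φ).mapHomotopyCategory _ ⋙ tensorToDerived M
  obtain ⟨F, ⟨hF, hTF⟩, ⟨eF⟩⟩ := kProjectiveImage_inverseImage_of_isWeaklyRegular hfs hφ hker _
    (kProjectiveImage_inverseImage_tensorToDerived 𝒟 htor hext)
  let P := projectiveResolution (ModuleCat.of Q Q)
  let A : KCat Q := (HomotopyCategory.quotient _ _).obj P.cochainComplex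
  obtain ⟨eTA⟩ : Nonempty (T.obj A ≅ (singleFunctor _ 0).obj M) :=
    (nonempty_iso_singleFunctor_of_projective P (ModuleCat.extendScalars φ ⋙ tensorLeft M)).map
      (· ≪≫ (singleFunctor _ 0).mapIso
        ((tensorLeft M).mapIso (extendScalarsObjSelfIso φ) ≪≫ ρ_ M))
  obtain ⟨F', j, hj⟩ := exists_isKoszul xs F
  obtain ⟨A', i, hi⟩ := exists_isKoszul xs A
  obtain ⟨r⟩ := nonempty_retract_of_isKoszul hxs hp hi hj (kProjective_quotient_obj _ 0) hF
    (cochainComplexIsoSingle P) eF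
  have hTA' : 𝒟 (T.obj A') := 𝒟.prop_of_retract (r.map T) (hj.prop (𝒟.inverseImage T) hTF)
  have hTi : IsKoszul (xs.map φ) (T.map i) := hi.map T φ fun x X ↦ by
    rw [Functor.comp_map, extendScalars_mapHomotopyCategory_map_smul_id, Functor.map_smul]
    exact congrArg _ ((tensorToDerived M).map_id _)
  refine ObjectProperty.prop_of_iso _ eTA (hTi.eventuallyHom_isZero (by simpa using hjac) ?_ hTA')
  exact ObjectProperty.prop_of_iso _ eTA.symm (eventuallyHom_noetherianModules_singleFunctor L M)

end DerivedTensor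

theorem stmt_1_general (Q : Type u) [CommRing Q] [IsRegularLocalRing Q] (f : List Q)
    (hf : RingTheory.Sequence.IsWeaklyRegular Q f) (M N L : ModuleCat.{u} (Q ⧸ Ideal.ofList f))
    [Module.Finite (Q ⧸ Ideal.ofList f) M] [Module.Finite (Q ⧸ Ideal.ofList f) L]
    (hN : Ring.jacobson (Q ⧸ Ideal.ofList f) • (⊤ : Submodule (Q ⧸ Ideal.ofList f) N) ≠ ⊤)
    (htor : ∀ i : ℕ, 0 < i →
      IsZero (((Tor (ModuleCat.{u} (Q ⧸ Ideal.ofList f)) i).obj M).obj N))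
    (hext : ∃ n : ℕ, ∀ i : ℕ, n ≤ i →
      IsZero (((Ext (Q ⧸ Ideal.ofList f) (ModuleCat.{u} (Q ⧸ Ideal.ofList f)) i).obj
        (Opposite.op L)).obj (MonoidalCategory.tensorObj M N))) :
    ∃ n : ℕ, ∀ i : ℕ, n ≤ i →
      IsZero (((Ext (Q ⧸ Ideal.ofList f) (ModuleCat.{u} (Q ⧸ Ideal.ofList f)) i).obj
        (Opposite.op L)).obj M) := by
  obtain ⟨xs, hxs, hmax⟩ := exists_isWeaklyRegular_ofList_eq_maximalIdeal Q
  have hjac {x : Q} (hx : x ∈ Ideal.ofList xs) :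
      Ideal.Quotient.mk (Ideal.ofList f) x ∈ Ring.jacobson (Q ⧸ Ideal.ofList f) :=
    Ring.map_jacobson_le (Ideal.Quotient.mk (Ideal.ofList f)) ⟨x, by
      rwa [hmax, ← IsLocalRing.ringJacobson_eq_maximalIdeal] at hx, rfl⟩
  have : (Ideal.ofList xs).IsMaximal := hmax ▸ IsLocalRing.maximalIdeal.isMaximal Q
  obtain ⟨p, hp⟩ := exists_surjective_quotient_isMaximal _
    (smul_top_restrictScalars_obj_ne_top (fun _ ↦ hjac) hN)
  exact (eventuallyHom_isZero_singleFunctor_iff L M).mp <|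
    eventuallyHom_isZero_of_isWeaklyRegular hf Ideal.Quotient.mk_surjective Ideal.mk_ker hxs
      (fun x hx ↦ hjac (Ideal.subset_span hx)) M N L hp htor <|
        (eventuallyHom_isZero_singleFunctor_iff L _).mpr hext

theorem stmt_1 (Q : Type u) [CommRing Q] [IsLocalRing Q] (hQ : IsRegularLocal Q)
    (f : List Q) (hf : RingTheory.Sequence.IsRegular Q f)
    (M N L : ModuleCat.{u} (Q ⧸ Ideal.ofList f))
    [Module.Finite (Q ⧸ Ideal.ofList f) M] [Module.Finite (Q ⧸ Ideal.ofList f) N]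
    [Module.Finite (Q ⧸ Ideal.ofList f) L]
    (hN : Nontrivial N)
    (htor : ∀ i : ℕ, 0 < i →
      IsZero (((Tor (ModuleCat.{u} (Q ⧸ Ideal.ofList f)) i).obj M).obj N))
    (hext : ∃ n : ℕ, ∀ i : ℕ, n ≤ i →
      IsZero (((Ext (Q ⧸ Ideal.ofList f) (ModuleCat.{u} (Q ⧸ Ideal.ofList f)) i).obj
        (Opposite.op L)).obj (MonoidalCategory.tensorObj M N))) :
    ∃ n : ℕ, ∀ i : ℕ, n ≤ i →
      IsZero (((Ext (Q ⧸ Ideal.ofList f) (ModuleCat.{u} (Q ⧸ Ideal.ofList f)) i).obj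
        (Opposite.op L)).obj M) := by
  have := hQ.isRegularLocalRing
  exact stmt_1_general Q f hf.toIsWeaklyRegular M N L
    (Submodule.FG.jacobson_smul_lt top_ne_bot Module.Finite.fg_top).ne htor hext
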